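/- Let λ be a real number with λ > -1/2, let n be a natural number with n ≥ 3, and set λ' = min{0,λ} and λ'' = max{0,λ}. Then the best Markov constant c_n(λ) satisfies (n+λ)²(n+2λ')²/((2λ+1)(2λ+5)) < (c_n(λ))² < (n+λ+λ''+2)⁴/(2(2λ+1)√(2λ+5)). -/

import Mathlib

open Polynomial Filter

/-- The weighted `L_2` norm with the Gegenbauer weight `w_lam(t) = (1-t^2)^(lam-1/2)`. -/
noncomputable def gegNorm (lam : ℝ) (f : ℝ → ℝ) : ℝ :=
  (∫ x in (-1:ℝ)..1, (f x) ^ 2 * (1 - x ^ 2) ^ (lam - 1/2)) ^ ((1:ℝ)/2)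

/-- The best Markov constant `c_n(lam)` in `‖p'‖ ≤ c_n(lam) ‖p‖` for polynomials of degree ≤ n. -/
noncomputable def markovConst (lam : ℝ) (n : ℕ) : ℝ :=
  sSup { r : ℝ | ∃ p : Polynomial ℝ, p ≠ 0 ∧ p.natDegree ≤ n ∧
    r = gegNorm lam (fun x => (Polynomial.derivative p).eval x) /
        gegNorm lam (fun x => p.eval x) }

/-!
In the basis of Gegenbauer polynomials `G k`, normalised so that
`G (k + 2)' = G k' + 2 (k + 1 + lam) G (k + 1)`, the derivatives `G j'` and `G k'` have inner
product `‖G (min j k)'‖²` if `j` and `k` have the same parity, and are orthogonal otherwise. With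
`u k = ‖G k'‖²` and `h k = ‖G k‖²`, the square of the Markov constant is therefore the largest
eigenvalue of the matrices `u (min j k) / √(h j * h k)`, one for each parity class of degrees.

It is at most the Frobenius norm of the larger of the two, whose square is summed explicitly and
compared with the telescoping majorant `(n + lam + 2) ^ 8 / (4 (2 lam + 1)² (2 lam + 5))`. The test
polynomial `∑ (u k / h k) G k`, over the degrees `k ≤ n` of the parity of `n`, gives the lower bound
`∑ u k ^ 2 / h k / u n`, a rational function of `n` and `lam`.
-/

section FiniteSums

theorem map_sum_smul_mul_sum_smul {R A ι κ : Type*} [CommSemiring R] [Semiring A] [Algebra R A]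
    (L : A →ₗ[R] R) (s : Finset ι) (t : Finset κ) (a : ι → R) (b : κ → R) (f : ι → A) (g : κ → A) :
    L ((∑ i ∈ s, a i • f i) * ∑ j ∈ t, b j • g j) =
      ∑ i ∈ s, ∑ j ∈ t, a i * b j * L (f i * g j) := by
  simp only [Finset.sum_mul_sum, smul_mul_smul_comm, map_sum, map_smul, smul_eq_mul]

/-- The left-hand side is the square of a quadratic form, and the first factor on the right is the
squared Frobenius norm of its matrix in an orthonormal basis for the weights `h`. -/
theorem sum_sum_mul_sq_le_sum_sum_div_mul {R ι : Type*} [Field R] [LinearOrder R]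
    [IsStrictOrderedRing R] (s : Finset ι) (K : ι → ι → R) (a : ι → R) {h : ι → R}
    (hh : ∀ i ∈ s, 0 < h i) :
    (∑ i ∈ s, ∑ j ∈ s, a i * a j * K i j) ^ 2 ≤
      (∑ i ∈ s, ∑ j ∈ s, K i j ^ 2 / (h i * h j)) * (∑ i ∈ s, a i ^ 2 * h i) ^ 2 := by
  rw [sq (∑ i ∈ s, a i ^ 2 * h i), Finset.sum_mul_sum]
  simp only [← Finset.sum_product']
  refine Finset.sum_sq_le_sum_mul_sum_of_sq_le_mul _ ?_ ?_ ?_ <;> rintro ⟨i, j⟩ hij <;>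
    obtain ⟨hi, hj⟩ := Finset.mem_product.1 hij <;> have hi := hh i hi <;> have hj := hh j hj
  · positivity
  · positivity
  · refine le_of_eq ?_
    field_simp

/-- The degrees `k ≤ n` of the same parity as `n`. Derivatives of Gegenbauer polynomials are
orthogonal across parities, so a Gram matrix splits into the blocks indexed by `parityBlock n` and
`parityBlock (n - 1)`. -/
def parityBlock (n : ℕ) : Finset ℕ := {k ∈ Finset.range (n + 1) | k % 2 = n % 2}

theorem mem_parityBlock {n k : ℕ} : k ∈ parityBlock n ↔ k ≤ n ∧ k % 2 = n % 2 := by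
  simp [parityBlock]

theorem parityBlock_zero : parityBlock 0 = {0} := by decide

theorem parityBlock_one : parityBlock 1 = {1} := by decide

theorem disjoint_parityBlock_succ (n : ℕ) : Disjoint (parityBlock (n + 1)) (parityBlock n) := by
  simp only [Finset.disjoint_left, mem_parityBlock]
  omega

theorem sum_parityBlock_add_two {M : Type*} [AddCommMonoid M] (f : ℕ → M) (n : ℕ) :
    ∑ k ∈ parityBlock (n + 2), f k = ∑ k ∈ parityBlock n, f k + f (n + 2) := by
  have insert_eq : parityBlock (n + 2) = insert (n + 2) (parityBlock n) := by
    ext k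
    simp only [Finset.mem_insert, mem_parityBlock]
    omega
  rw [insert_eq, Finset.sum_insert (by simp [mem_parityBlock]), add_comm]

theorem sum_parityBlock_succ_add_sum_parityBlock {M : Type*} [AddCommMonoid M] (f : ℕ → M)
    (n : ℕ) : ∑ k ∈ parityBlock (n + 1), f k + ∑ k ∈ parityBlock n, f k =
      ∑ k ∈ Finset.Iic (n + 1), f k := by
  rw [← Finset.sum_union (disjoint_parityBlock_succ n)]
  congr 1
  ext k
  simp only [Finset.mem_union, mem_parityBlock, Finset.mem_Iic]
  omega

end FiniteSums

section GegenbauerPolynomials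

/-- The Gegenbauer differential operator `p ↦ (1 - x²) p'' - (2 lam + 1) x p'`, which is symmetric
for the Gegenbauer weight. -/
noncomputable def gegOperator (lam : ℝ) (p : ℝ[X]) : ℝ[X] :=
  (1 - X ^ 2) * derivative (derivative p) - C (2 * lam + 1) * X * derivative p

/-- Gegenbauer polynomials, divided by the parameter in positive degrees so that the value
`lam = 0` is not degenerate. The recursion is the raising relation for these polynomials. -/
noncomputable def geg (lam : ℝ) : ℕ → ℝ[X]
  | 0 => 1
  | 1 => C 2 * X
  | k + 2 => C (1 / ((k : ℝ) + 2)) * (C ((k : ℝ) + 1 + 2 * lam) * X * geg lam (k + 1) -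
      (1 - X ^ 2) * derivative (geg lam (k + 1)))

variable (lam : ℝ) (k : ℕ)

@[simp]
theorem geg_zero : geg lam 0 = 1 := by rw [geg]

@[simp]
theorem geg_one : geg lam 1 = C 2 * X := by rw [geg]

theorem C_mul_geg_add_two :
    C ((k : ℝ) + 2) * geg lam (k + 2) = C ((k : ℝ) + 1 + 2 * lam) * X * geg lam (k + 1) -
      (1 - X ^ 2) * derivative (geg lam (k + 1)) := by
  have h : (k : ℝ) + 2 ≠ 0 := by positivity
  rw [geg, ← mul_assoc, ← C_mul, mul_one_div_cancel h, C_1, one_mul]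

variable {lam k} in
/-- Differentiating the raising relation produces a second derivative, which the differential
equation one degree below eliminates. -/
theorem derivative_geg_add_two_of_gegOperator_eq
    (ode : gegOperator lam (geg lam (k + 1)) =
      -(C (((k : ℝ) + 1) * ((k : ℝ) + 1 + 2 * lam)) * geg lam (k + 1))) :
    derivative (geg lam (k + 2)) =
      X * derivative (geg lam (k + 1)) + C ((k : ℝ) + 1 + 2 * lam) * geg lam (k + 1) := by
  have h : C ((k : ℝ) + 2) ≠ 0 := by
    rw [Ne, C_eq_zero]
    positivity
  apply mul_left_cancel₀ h
  have hd := congrArg derivative (C_mul_geg_add_two lam k)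
  simp only [derivative_mul, derivative_C, derivative_sub, derivative_one, derivative_X_pow,
    derivative_X, zero_mul, zero_add] at hd
  rw [hd]
  simp only [gegOperator, C_add, C_mul, map_natCast, C_1, map_ofNat, Nat.cast_ofNat] at ode ⊢
  linear_combination -ode

theorem gegOperator_geg_succ :
    gegOperator lam (geg lam (k + 1)) =
      -(C (((k : ℝ) + 1) * ((k : ℝ) + 1 + 2 * lam)) * geg lam (k + 1)) := by
  induction k with
  | zero =>
    have hd : derivative (geg lam 1) = C 2 := by simp
    rw [zero_add, gegOperator, hd, derivative_C, geg_one]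
    simp only [C_add, C_mul, C_1, C_0, map_ofNat, Nat.cast_zero]
    ring
  | succ k ih =>
    have hd := derivative_geg_add_two_of_gegOperator_eq ih
    have hr := C_mul_geg_add_two lam k
    rw [gegOperator, hd]
    simp only [derivative_add, derivative_mul, derivative_C, derivative_X, zero_mul, zero_add]
    push_cast
    simp only [gegOperator, C_add, C_mul, map_natCast, C_1, map_ofNat] at ih hr ⊢
    linear_combination X * ih + ((k : ℝ[X]) + 2 + 2 * C lam) * hr

theorem gegOperator_geg :
    gegOperator lam (geg lam k) = -(C ((k : ℝ) * (k + 2 * lam)) * geg lam k) := by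
  cases k with
  | zero => simp [gegOperator]
  | succ k => exact_mod_cast gegOperator_geg_succ lam k

theorem derivative_geg_add_two_eq_X_mul_add :
    derivative (geg lam (k + 2)) =
      X * derivative (geg lam (k + 1)) + C ((k : ℝ) + 1 + 2 * lam) * geg lam (k + 1) :=
  derivative_geg_add_two_of_gegOperator_eq (gegOperator_geg_succ lam k)

theorem X_mul_derivative_geg_succ :
    X * derivative (geg lam (k + 1)) =
      C ((k : ℝ) + 1) * geg lam (k + 1) + derivative (geg lam k) := by
  cases k with
  | zero => simp
  | succ k =>
    have hr := C_mul_geg_add_two lam k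
    rw [derivative_geg_add_two_eq_X_mul_add]
    push_cast
    simp only [C_add, C_mul, map_natCast, C_1, map_ofNat] at hr ⊢
    linear_combination -hr

theorem derivative_geg_add_two :
    derivative (geg lam (k + 2)) =
      derivative (geg lam k) + C (2 * ((k : ℝ) + 1 + lam)) * geg lam (k + 1) := by
  rw [derivative_geg_add_two_eq_X_mul_add, X_mul_derivative_geg_succ]
  simp only [C_add, C_mul, map_natCast, C_1, map_ofNat]
  ring

theorem succ_mul_coeff_geg_add_two (j : ℕ) :
    ((j : ℝ) + 1) * (geg lam (k + 2)).coeff (j + 1) =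
      ((j : ℝ) + k + 1 + 2 * lam) * (geg lam (k + 1)).coeff j := by
  have h := congrArg (fun p => coeff p j) (derivative_geg_add_two_eq_X_mul_add lam k)
  simp only [coeff_derivative, coeff_add, coeff_C_mul] at h
  rw [mul_comm, h]
  cases j with
  | zero => simp
  | succ j =>
    rw [coeff_X_mul, coeff_derivative]
    push_cast
    ring

variable {lam k} in
theorem coeff_geg_eq_zero_of_lt {j : ℕ} (hj : k < j) : (geg lam k).coeff j = 0 := by
  induction k using Nat.twoStepInduction generalizing j with
  | zero => simp [coeff_one, hj.ne']
  | one => simp [coeff_X, hj.ne]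
  | more k _ ih =>
    obtain ⟨i, rfl⟩ : ∃ i, j = i + 1 := ⟨j - 1, by omega⟩
    have h := succ_mul_coeff_geg_add_two lam k i
    rw [ih (by omega), mul_zero] at h
    exact (mul_eq_zero.1 h).resolve_left (by positivity)

variable {lam}

theorem coeff_geg_self_pos (hlam : -(1 / 2 : ℝ) < lam) : 0 < (geg lam k).coeff k := by
  induction k using Nat.twoStepInduction with
  | zero => simp
  | one => simp
  | more k _ ih =>
    have h := succ_mul_coeff_geg_add_two lam k (k + 1)
    push_cast at h
    have factor_pos : (0 : ℝ) < k + 1 + k + 1 + 2 * lam := by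
      linarith [(k.cast_nonneg : (0 : ℝ) ≤ k)]
    exact pos_of_mul_pos_right (h ▸ mul_pos factor_pos ih) (by positivity)

theorem degree_geg (hlam : -(1 / 2 : ℝ) < lam) : (geg lam k).degree = k :=
  degree_eq_of_le_of_coeff_ne_zero
    (degree_le_iff_coeff_zero _ _ |>.2 fun _ hj => coeff_geg_eq_zero_of_lt (by exact_mod_cast hj))
    (coeff_geg_self_pos k hlam).ne'

/-- The Gegenbauer polynomials as a sequence of polynomials of degrees `0, 1, 2, …`, which makes
Mathlib's spanning results applicable. -/
noncomputable def gegSequence (hlam : -(1 / 2 : ℝ) < lam) : Polynomial.Sequence ℝ where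
  elems' := geg lam
  degree_eq' k := degree_geg k hlam

theorem geg_ne_zero (hlam : -(1 / 2 : ℝ) < lam) : geg lam k ≠ 0 := (gegSequence hlam).ne_zero k

/-- The Gegenbauer expansion with coefficients `a` and degrees in `s`. -/
noncomputable def gegSum (lam : ℝ) (a : ℕ → ℝ) (s : Finset ℕ) : ℝ[X] := ∑ k ∈ s, a k • geg lam k

theorem derivative_gegSum (a : ℕ → ℝ) (s : Finset ℕ) :
    derivative (gegSum lam a s) = ∑ k ∈ s, a k • derivative (geg lam k) := by
  simp only [gegSum, derivative_sum, derivative_smul]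

theorem natDegree_gegSum_parityBlock_le (hlam : -(1 / 2 : ℝ) < lam) (a : ℕ → ℝ) (n : ℕ) :
    (gegSum lam a (parityBlock n)).natDegree ≤ n :=
  natDegree_sum_le_of_forall_le _ _ fun k hk => (natDegree_smul_le _ _).trans <|
    ((gegSequence hlam).natDegree_eq k).trans_le (mem_parityBlock.1 hk).1

theorem exists_eq_gegSum (hlam : -(1 / 2 : ℝ) < lam) {n : ℕ} {p : ℝ[X]} (hp : p.natDegree ≤ n) :
    ∃ a : ℕ → ℝ, p = gegSum lam a (Finset.Iic n) := by
  have hspan := (gegSequence hlam).span_degreeLE (m := n) fun i _ =>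
    (leadingCoeff_ne_zero.2 ((gegSequence hlam).ne_zero i)).isUnit
  have hmem : p ∈ Submodule.span ℝ (gegSequence hlam '' (Finset.Iic n : Finset ℕ)) := by
    rw [Finset.coe_Iic, hspan, mem_degreeLE]
    exact natDegree_le_iff_degree_le.1 hp
  obtain ⟨a, ha⟩ := (Submodule.mem_span_image_finset_iff_exists_fun' ℝ).1 hmem
  exact ⟨a, ha.symm⟩

end GegenbauerPolynomials

section GegenbauerIntegral

theorem intervalIntegrable_one_sub_sq_rpow {a : ℝ} (ha : -1 < a) :
    IntervalIntegrable (fun x : ℝ => (1 - x ^ 2) ^ a) MeasureTheory.volume (-1) 1 := by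
  have left_half :
      IntervalIntegrable (fun x : ℝ => (1 - x ^ 2) ^ a) MeasureTheory.volume (-1) 0 := by
    have singular : IntervalIntegrable (fun x : ℝ => (1 + x) ^ a) MeasureTheory.volume (-1) 0 := by
      simpa using (intervalIntegral.intervalIntegrable_rpow' (a := 0) (b := 1) ha).comp_add_left 1
    have regular : ContinuousOn (fun x : ℝ => (1 - x) ^ a) (Set.uIcc (-1) 0) := by
      refine ContinuousOn.rpow_const (by fun_prop) fun x hx => Or.inl ?_
      rw [Set.uIcc_of_le (by norm_num)] at hx
      linarith [hx.2]
    refine (singular.mul_continuousOn regular).congr fun x hx => ?_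
    rw [Set.uIoc_of_le (by norm_num)] at hx
    change (1 + x) ^ a * (1 - x) ^ a = (1 - x ^ 2) ^ a
    rw [← Real.mul_rpow (by linarith [hx.1]) (by linarith [hx.2])]
    ring_nf
  refine left_half.trans ?_
  simpa using ((IntervalIntegrable.iff_comp_neg).1 left_half).symm

variable {lam : ℝ} (hlam : -(1 / 2 : ℝ) < lam)

include hlam in
theorem intervalIntegrable_eval_mul_gegWeight (p : ℝ[X]) :
    IntervalIntegrable (fun x : ℝ => p.eval x * (1 - x ^ 2) ^ (lam - 1 / 2))
      MeasureTheory.volume (-1) 1 :=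
  (intervalIntegrable_one_sub_sq_rpow (by linarith)).continuousOn_mul p.continuousOn

/-- Integration of polynomials against the Gegenbauer weight. The hypothesis on `lam` makes the
weight integrable, which linearity requires. -/
noncomputable def gegIntegral : ℝ[X] →ₗ[ℝ] ℝ where
  toFun p := ∫ x in (-1 : ℝ)..1, p.eval x * (1 - x ^ 2) ^ (lam - 1 / 2)
  map_add' p q := by
    rw [← intervalIntegral.integral_add (intervalIntegrable_eval_mul_gegWeight hlam p)
      (intervalIntegrable_eval_mul_gegWeight hlam q)]
    simp only [eval_add, add_mul]
  map_smul' c p := by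
    simp only [eval_smul, smul_eq_mul, RingHom.id_apply, mul_assoc,
      intervalIntegral.integral_const_mul]

theorem gegIntegral_apply (p : ℝ[X]) :
    gegIntegral hlam p = ∫ x in (-1 : ℝ)..1, p.eval x * (1 - x ^ 2) ^ (lam - 1 / 2) := rfl

theorem gegNorm_eval (p : ℝ[X]) :
    gegNorm lam (fun x => p.eval x) = √(gegIntegral hlam (p ^ 2)) := by
  rw [gegNorm, gegIntegral_apply, Real.sqrt_eq_rpow]
  simp only [eval_pow]

theorem gegIntegral_C_mul (c : ℝ) (p : ℝ[X]) :
    gegIntegral hlam (C c * p) = c * gegIntegral hlam p := by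
  rw [C_mul', map_smul, smul_eq_mul]

theorem gegIntegral_sq_pos {p : ℝ[X]} (hp : p ≠ 0) : 0 < gegIntegral hlam (p ^ 2) := by
  have weight_pos {x : ℝ} (hx : x ∈ Set.Ioo (-1) 1) : 0 < (1 - x ^ 2) ^ (lam - 1 / 2) :=
    Real.rpow_pos_of_pos (by nlinarith [hx.1, hx.2]) _
  have integrand_nonneg : ∀ x ∈ Set.Ioc (-1 : ℝ) 1,
      0 ≤ (p ^ 2).eval x * (1 - x ^ 2) ^ (lam - 1 / 2) := fun x hx => by
    rw [eval_pow]
    exact mul_nonneg (sq_nonneg _) (Real.rpow_nonneg (by nlinarith [hx.1, hx.2]) _)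
  have support_contains : Set.Ioo (-1 : ℝ) 1 \ p.roots.toFinset ⊆
      (Function.support fun x : ℝ => (p ^ 2).eval x * (1 - x ^ 2) ^ (lam - 1 / 2)) ∩
        Set.Ioc (-1) 1 := by
    rintro x ⟨hx, hroot⟩
    have heval : p.eval x ≠ 0 := fun h => hroot (by simp [hp, h])
    refine ⟨?_, hx.1, hx.2.le⟩
    rw [Function.mem_support, eval_pow]
    exact mul_ne_zero (pow_ne_zero _ heval) (weight_pos hx).ne'
  rw [gegIntegral_apply, intervalIntegral.integral_pos_iff_support_of_nonneg_ae' ?_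
    (intervalIntegrable_eval_mul_gegWeight hlam _)]
  · refine ⟨by norm_num, lt_of_lt_of_le ?_ (MeasureTheory.measure_mono support_contains)⟩
    rw [MeasureTheory.measure_sdiff_null (Finset.measure_zero _ _)]
    simp
  · rw [Set.uIoc_of_le (by norm_num)]
    exact (MeasureTheory.ae_restrict_iff' measurableSet_Ioc).2 <|
      Eventually.of_forall integrand_nonneg

theorem gegIntegral_sq_nonneg (p : ℝ[X]) : 0 ≤ gegIntegral hlam (p ^ 2) := by
  rcases eq_or_ne p 0 with rfl | hp
  · simp
  · exact (gegIntegral_sq_pos hlam hp).le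

/-- The integrand is the derivative of `(1 - x²) ^ (lam + 1/2) * f`, which vanishes at `±1`. -/
theorem gegIntegral_one_sub_sq_mul_derivative_sub (f : ℝ[X]) :
    gegIntegral hlam ((1 - X ^ 2) * derivative f - C (2 * lam + 1) * X * f) = 0 := by
  have primitive_continuous : ContinuousOn (fun x : ℝ => (1 - x ^ 2) ^ (lam + 1 / 2) * f.eval x)
      (Set.Icc (-1) 1) :=
    (ContinuousOn.rpow_const (by fun_prop) fun x _ => Or.inr (by linarith)).mul f.continuousOn
  have primitive_deriv : ∀ x ∈ Set.Ioo (-1 : ℝ) 1,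
      HasDerivAt (fun x : ℝ => (1 - x ^ 2) ^ (lam + 1 / 2) * f.eval x)
        (((1 - X ^ 2) * derivative f - C (2 * lam + 1) * X * f).eval x *
          (1 - x ^ 2) ^ (lam - 1 / 2)) x := fun x hx => by
    have hx1 : 0 < 1 - x ^ 2 := by nlinarith [hx.1, hx.2]
    have base_deriv : HasDerivAt (fun x : ℝ => 1 - x ^ 2) (-(2 * x)) x := by
      simpa using (hasDerivAt_pow 2 x).const_sub 1
    refine ((base_deriv.rpow_const (p := lam + 1 / 2) (Or.inl hx1.ne')).mul
      (f.hasDerivAt x)).congr_deriv ?_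
    rw [show lam + 1 / 2 - 1 = lam - 1 / 2 by ring, show lam + 1 / 2 = lam - 1 / 2 + 1 by ring,
      Real.rpow_add hx1, Real.rpow_one]
    simp only [eval_sub, eval_mul, eval_one, eval_pow, eval_X, eval_C]
    ring
  have exponent_ne_zero : lam + 1 / 2 ≠ 0 := by linarith
  rw [gegIntegral_apply, intervalIntegral.integral_eq_sub_of_hasDerivAt_of_le (by norm_num)
    primitive_continuous primitive_deriv (intervalIntegrable_eval_mul_gegWeight hlam _)]
  norm_num [Real.zero_rpow, exponent_ne_zero]

theorem gegIntegral_gegOperator_mul (p q : ℝ[X]) :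
    gegIntegral hlam (gegOperator lam p * q) =
      -gegIntegral hlam ((1 - X ^ 2) * (derivative p * derivative q)) := by
  have parts := gegIntegral_one_sub_sq_mul_derivative_sub hlam (derivative p * q)
  rw [eq_neg_iff_add_eq_zero, ← map_add, ← parts, gegOperator, derivative_mul]
  congr 1
  ring

end GegenbauerIntegral

section Orthogonality

variable {lam : ℝ} (hlam : -(1 / 2 : ℝ) < lam)

theorem gegIntegral_one_sub_sq_mul_derivative_geg_mul (k : ℕ) (q : ℝ[X]) :
    gegIntegral hlam ((1 - X ^ 2) * (derivative (geg lam k) * derivative q)) =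
      k * (k + 2 * lam) * gegIntegral hlam (geg lam k * q) := by
  have green := gegIntegral_gegOperator_mul hlam (geg lam k) q
  rw [gegOperator_geg, neg_mul, mul_assoc, map_neg, neg_inj, gegIntegral_C_mul] at green
  exact green.symm

theorem gegIntegral_geg_mul_geg {j k : ℕ} (hjk : j ≠ k) :
    gegIntegral hlam (geg lam j * geg lam k) = 0 := by
  wlog hlt : j < k generalizing j k
  · rw [mul_comm]
    exact this hjk.symm (by omega)
  have hj := gegIntegral_one_sub_sq_mul_derivative_geg_mul hlam j (geg lam k)
  have hk := gegIntegral_one_sub_sq_mul_derivative_geg_mul hlam k (geg lam j)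
  rw [mul_comm (derivative (geg lam k)), mul_comm (geg lam k), hj] at hk
  have eigenvalue_gap :
      ((k : ℝ) - j) * (k + j + 2 * lam) * gegIntegral hlam (geg lam j * geg lam k) = 0 := by
    linear_combination -hk
  have hlt' : (j : ℝ) + 1 ≤ k := by exact_mod_cast hlt
  exact (mul_eq_zero.1 eigenvalue_gap).resolve_left
    (mul_pos (by linarith) (by linarith [(j.cast_nonneg : (0 : ℝ) ≤ j)])).ne'

theorem gegIntegral_derivative_geg_mul_geg {j k : ℕ} (hjk : j ≤ k) :
    gegIntegral hlam (derivative (geg lam j) * geg lam k) = 0 := by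
  induction j using Nat.twoStepInduction with
  | zero => simp
  | one =>
    have h : derivative (geg lam 1) * geg lam k = C 2 * (geg lam 0 * geg lam k) := by simp
    rw [h, gegIntegral_C_mul, gegIntegral_geg_mul_geg hlam (by omega), mul_zero]
  | more j ih _ =>
    rw [derivative_geg_add_two, add_mul, map_add, ih (by omega), mul_assoc, gegIntegral_C_mul,
      gegIntegral_geg_mul_geg hlam (by omega), mul_zero, add_zero]

/-- `‖G k‖²` for the Gegenbauer polynomial `G k`. -/
noncomputable def gegNormSq (k : ℕ) : ℝ := gegIntegral hlam (geg lam k ^ 2)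

/-- `‖G k'‖²` for the Gegenbauer polynomial `G k`. -/
noncomputable def gegDerivNormSq (k : ℕ) : ℝ := gegIntegral hlam (derivative (geg lam k) ^ 2)

theorem gegNormSq_pos (k : ℕ) : 0 < gegNormSq hlam k :=
  gegIntegral_sq_pos hlam (geg_ne_zero k hlam)

theorem gegIntegral_derivative_geg_mul_derivative_geg_add_two {j k : ℕ} (hjk : j ≤ k + 1) :
    gegIntegral hlam (derivative (geg lam j) * derivative (geg lam (k + 2))) =
      gegIntegral hlam (derivative (geg lam j) * derivative (geg lam k)) := by
  rw [derivative_geg_add_two, mul_add, map_add, mul_left_comm, gegIntegral_C_mul,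
    gegIntegral_derivative_geg_mul_geg hlam hjk, mul_zero, add_zero]

theorem gegIntegral_derivative_geg_mul_derivative_geg_succ (k : ℕ) :
    gegIntegral hlam (derivative (geg lam k) * derivative (geg lam (k + 1))) = 0 := by
  induction k with
  | zero => simp
  | succ k ih =>
    rw [gegIntegral_derivative_geg_mul_derivative_geg_add_two hlam le_rfl, mul_comm, ih]

theorem gegIntegral_derivative_geg_mul_derivative_geg_add (j i : ℕ) :
    gegIntegral hlam (derivative (geg lam j) * derivative (geg lam (j + i))) =
      if i % 2 = 0 then gegDerivNormSq hlam j else 0 := by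
  induction i using Nat.twoStepInduction with
  | zero => simp [gegDerivNormSq, sq]
  | one => simp [gegIntegral_derivative_geg_mul_derivative_geg_succ]
  | more i ih _ =>
    rw [← add_assoc, gegIntegral_derivative_geg_mul_derivative_geg_add_two hlam (by omega), ih,
      Nat.add_mod_right]

theorem gegIntegral_derivative_geg_mul_derivative_geg (j k : ℕ) :
    gegIntegral hlam (derivative (geg lam j) * derivative (geg lam k)) =
      if j % 2 = k % 2 then gegDerivNormSq hlam (min j k) else 0 := by
  wlog hjk : j ≤ k generalizing j k
  · rw [mul_comm, min_comm, this k j (by omega)]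
    simp only [eq_comm]
  obtain ⟨i, rfl⟩ := Nat.exists_eq_add_of_le hjk
  rw [gegIntegral_derivative_geg_mul_derivative_geg_add, min_eq_left hjk]
  exact if_congr (by omega) rfl rfl

theorem gegDerivNormSq_succ (k : ℕ) :
    gegDerivNormSq hlam (k + 1) =
      gegDerivNormSq hlam k + 2 * (k + 1) * (k + 1 + lam) * gegNormSq hlam (k + 1) := by
  have split : derivative (geg lam (k + 1)) ^ 2 =
      (1 - X ^ 2) * (derivative (geg lam (k + 1)) * derivative (geg lam (k + 1))) +
        (C (((k : ℝ) + 1) ^ 2) * geg lam (k + 1) ^ 2 +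
          C (2 * ((k : ℝ) + 1)) * (derivative (geg lam k) * geg lam (k + 1)) +
            derivative (geg lam k) ^ 2) := by
    simp only [C_mul, C_pow, map_ofNat]
    linear_combination (X * derivative (geg lam (k + 1)) + C ((k : ℝ) + 1) * geg lam (k + 1) +
      derivative (geg lam k)) * X_mul_derivative_geg_succ lam k
  rw [gegDerivNormSq, split, map_add, map_add, map_add,
    gegIntegral_one_sub_sq_mul_derivative_geg_mul, ← sq, gegIntegral_C_mul, gegIntegral_C_mul,
    gegIntegral_derivative_geg_mul_geg hlam k.le_succ, gegDerivNormSq, gegNormSq]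
  push_cast
  ring

theorem gegDerivNormSq_add_two (k : ℕ) :
    gegDerivNormSq hlam (k + 2) =
      gegDerivNormSq hlam k + 4 * (k + 1 + lam) ^ 2 * gegNormSq hlam (k + 1) := by
  have expand : derivative (geg lam (k + 2)) ^ 2 = derivative (geg lam k) ^ 2 +
      C (4 * ((k : ℝ) + 1 + lam)) * (derivative (geg lam k) * geg lam (k + 1)) +
        C (4 * ((k : ℝ) + 1 + lam) ^ 2) * geg lam (k + 1) ^ 2 := by
    rw [derivative_geg_add_two]
    simp only [C_add, C_mul, C_pow, map_natCast, C_1, map_ofNat]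
    ring
  rw [gegDerivNormSq, expand, map_add, map_add, gegIntegral_C_mul, gegIntegral_C_mul,
    gegIntegral_derivative_geg_mul_geg hlam k.le_succ, gegDerivNormSq, gegNormSq]
  ring

theorem gegIntegral_gegSum_sq (a : ℕ → ℝ) (s : Finset ℕ) :
    gegIntegral hlam (gegSum lam a s ^ 2) = ∑ k ∈ s, a k ^ 2 * gegNormSq hlam k := by
  rw [sq, gegSum, map_sum_smul_mul_sum_smul]
  refine Finset.sum_congr rfl fun k hk => ?_
  rw [Finset.sum_eq_single_of_mem k hk fun j _ hj => by
    rw [gegIntegral_geg_mul_geg hlam hj.symm, mul_zero], gegNormSq, sq, sq]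

theorem gegIntegral_gegSum_mul_gegSum (a b : ℕ → ℝ) {s t : Finset ℕ} (hst : Disjoint s t) :
    gegIntegral hlam (gegSum lam a s * gegSum lam b t) = 0 := by
  rw [gegSum, gegSum, map_sum_smul_mul_sum_smul]
  refine Finset.sum_eq_zero fun j hj => Finset.sum_eq_zero fun k hk => ?_
  rw [gegIntegral_geg_mul_geg hlam (Finset.disjoint_iff_ne.1 hst j hj k hk), mul_zero]

theorem gegIntegral_derivative_gegSum_parityBlock_sq (a : ℕ → ℝ) (n : ℕ) :
    gegIntegral hlam (derivative (gegSum lam a (parityBlock n)) ^ 2) =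
      ∑ j ∈ parityBlock n, ∑ k ∈ parityBlock n, a j * a k * gegDerivNormSq hlam (min j k) := by
  rw [sq, derivative_gegSum, map_sum_smul_mul_sum_smul]
  refine Finset.sum_congr rfl fun j hj => Finset.sum_congr rfl fun k hk => ?_
  have same_parity : j % 2 = k % 2 := (mem_parityBlock.1 hj).2.trans (mem_parityBlock.1 hk).2.symm
  rw [gegIntegral_derivative_geg_mul_derivative_geg, if_pos same_parity]

theorem gegIntegral_derivative_gegSum_parityBlock_mul_derivative_gegSum (a b : ℕ → ℝ) (n : ℕ) :
    gegIntegral hlam (derivative (gegSum lam a (parityBlock (n + 1))) *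
      derivative (gegSum lam b (parityBlock n))) = 0 := by
  rw [derivative_gegSum, derivative_gegSum, map_sum_smul_mul_sum_smul]
  refine Finset.sum_eq_zero fun j hj => Finset.sum_eq_zero fun k hk => ?_
  have opposite_parity : j % 2 ≠ k % 2 := by
    have hj := (mem_parityBlock.1 hj).2
    have hk := (mem_parityBlock.1 hk).2
    omega
  rw [gegIntegral_derivative_geg_mul_derivative_geg, if_neg opposite_parity, mul_zero]

theorem gegIntegral_derivative_gegSum_parityBlock_mul_derivative_geg (a : ℕ → ℝ) (n : ℕ) :
    gegIntegral hlam (derivative (gegSum lam a (parityBlock n)) * derivative (geg lam n)) =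
      ∑ k ∈ parityBlock n, a k * gegDerivNormSq hlam k := by
  simp only [derivative_gegSum, Finset.sum_mul, smul_mul_assoc, map_sum, map_smul, smul_eq_mul]
  refine Finset.sum_congr rfl fun k hk => ?_
  obtain ⟨hkn, same_parity⟩ := mem_parityBlock.1 hk
  rw [gegIntegral_derivative_geg_mul_derivative_geg, if_pos same_parity, min_eq_left hkn]

end Orthogonality

section RationalFunctions

variable {lam x : ℝ}

/-- The ratio `‖G x'‖² / ‖G x‖²`, as a rational function of the degree `x`. -/
noncomputable def gegRatio (lam x : ℝ) : ℝ := 2 * x * (x + lam) * (x + 2 * lam) / (2 * lam + 1)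

/-- The numerator of the summand of `gegQuotient` that is even in `x + lam`. -/
noncomputable def gegQuartic (lam x : ℝ) : ℝ :=
  (2 * lam + 3) * (x + lam) ^ 4 + (10 * lam ^ 2 + 31 * lam + 20) * (x + lam) ^ 2 -
    (lam + 1) * (lam + 2) * (2 * lam ^ 3 + 7 * lam ^ 2 + 6 * lam + 4)

/-- The quotient `(∑ u k ^ 2 / h k) / u x` over the degrees `k ≤ x` of the parity of `x`, where
`h k = ‖G k‖²` and `u k = ‖G k'‖²`, as a rational function of the degree `x`. -/
noncomputable def gegQuotient (lam x : ℝ) : ℝ :=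
  gegRatio lam x / 2 + gegQuartic lam x / ((2 * lam + 1) * (2 * lam + 3) * (2 * lam + 5))

theorem gegRatio_pos (hlam : -(1 / 2 : ℝ) < lam) (hx : 1 ≤ x) : 0 < gegRatio lam x := by
  have h₁ : 0 < x + lam := by linarith
  have h₂ : 0 < x + 2 * lam := by linarith
  have h₃ : 0 < 2 * lam + 1 := by linarith
  rw [gegRatio]
  positivity

theorem gegQuotient_one (hlam : -(1 / 2 : ℝ) < lam) : gegQuotient lam 1 = gegRatio lam 1 := by
  have h₁ : 2 * lam + 1 ≠ 0 := by linarith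
  have h₃ : 2 * lam + 3 ≠ 0 := by linarith
  have h₅ : 2 * lam + 5 ≠ 0 := by linarith
  rw [gegQuotient, gegRatio, gegQuartic]
  field_simp
  ring

/-- The left-hand factors and `x * (x + 1)` are in the ratio `‖G (x + 2)'‖² : ‖G x'‖²`, so this is
the induction step for the sum that `gegQuotient` stands for. -/
theorem mul_gegQuotient_add_two_sub_gegRatio (hlam : -(1 / 2 : ℝ) < lam) :
    (x + 2 + 2 * lam) * (x + 1 + 2 * lam) * (gegQuotient lam (x + 2) - gegRatio lam (x + 2)) =
      x * (x + 1) * gegQuotient lam x := by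
  have h₁ : 2 * lam + 1 ≠ 0 := by linarith
  have h₃ : 2 * lam + 3 ≠ 0 := by linarith
  have h₅ : 2 * lam + 5 ≠ 0 := by linarith
  rw [gegQuotient, gegQuotient, gegRatio, gegRatio, gegQuartic, gegQuartic]
  field_simp
  ring

/-- With `x = 1 + t`, all coefficients in `t` and `lam` of the difference are positive. -/
theorem lt_gegQuotient_numerator_of_nonneg (hlam : 0 ≤ lam) (hx : 1 ≤ x) :
    (2 * lam + 3) * ((x + lam) ^ 2 * x ^ 2) <
      (2 * lam + 3) * (2 * lam + 5) * (x * (x + lam) * (x + 2 * lam)) + gegQuartic lam x := by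
  obtain ⟨t, ht, rfl⟩ : ∃ t, 0 ≤ t ∧ x = 1 + t := ⟨x - 1, by linarith, by ring⟩
  rw [gegQuartic, ← sub_pos]
  ring_nf
  positivity

/-- With `x = 1 + t` and `s = 2 lam + 1`, the difference has three negative terms, of degree at
least `3` in `s`, which the terms `32 s + 48 t + 86 t²` absorb because `s < 1`. -/
theorem lt_gegQuotient_numerator_of_neg (hlam : -(1 / 2 : ℝ) < lam) (hneg : lam < 0) (hx : 1 ≤ x) :
    (2 * lam + 3) * ((x + lam) ^ 2 * (x + 2 * lam) ^ 2) <
      (2 * lam + 3) * (2 * lam + 5) * (x * (x + lam) * (x + 2 * lam)) + gegQuartic lam x := by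
  obtain ⟨t, ht, rfl⟩ : ∃ t, 0 ≤ t ∧ x = 1 + t := ⟨x - 1, by linarith, by ring⟩
  obtain ⟨s, rfl⟩ : ∃ s, lam = (s - 1) / 2 := ⟨2 * lam + 1, by ring⟩
  have hs : 0 < s := by linarith
  have hs1 : s ≤ 1 := by linarith
  have h₅ : s ^ 5 ≤ s := pow_le_of_le_one hs.le hs1 (by norm_num)
  have h₄ : t * s ^ 4 ≤ t := mul_le_of_le_one_right ht (pow_le_one₀ hs.le hs1)
  have h₃ : t ^ 2 * s ^ 3 ≤ t ^ 2 := mul_le_of_le_one_right (sq_nonneg t) (pow_le_one₀ hs.le hs1)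
  have positive_terms : 0 < 31 * s + 46 * t + 85 * t ^ 2 + 40 * t ^ 3 + 156 * s * t +
      135 * s * t ^ 2 + 20 * s * t ^ 3 + 54 * s ^ 2 + 118 * s ^ 2 * t + 40 * s ^ 2 * t ^ 2 +
      23 * s ^ 3 + 20 * s ^ 3 * t := by
    positivity
  rw [gegQuartic]
  linarith

theorem sq_mul_sq_div_lt_gegQuotient (hlam : -(1 / 2 : ℝ) < lam) (hx : 1 ≤ x) :
    (x + lam) ^ 2 * (x + 2 * min 0 lam) ^ 2 / ((2 * lam + 1) * (2 * lam + 5)) <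
      gegQuotient lam x := by
  have h₁ : 0 < 2 * lam + 1 := by linarith
  have h₃ : 0 < 2 * lam + 3 := by linarith
  have h₅ : 0 < 2 * lam + 5 := by linarith
  have numerator_lt : (2 * lam + 3) * ((x + lam) ^ 2 * (x + 2 * min 0 lam) ^ 2) <
      (2 * lam + 3) * (2 * lam + 5) * (x * (x + lam) * (x + 2 * lam)) + gegQuartic lam x := by
    rcases le_or_gt 0 lam with hnonneg | hneg
    · rw [min_eq_left hnonneg, mul_zero, add_zero]
      exact lt_gegQuotient_numerator_of_nonneg hnonneg hx
    · rw [min_eq_right hneg.le]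
      exact lt_gegQuotient_numerator_of_neg hlam hneg hx
  have quotient_lt := div_lt_div_of_pos_right numerator_lt (mul_pos h₃ (mul_pos h₁ h₅))
  rw [mul_div_mul_left _ _ h₃.ne'] at quotient_lt
  refine quotient_lt.trans_eq ?_
  rw [gegQuotient, gegRatio]
  field_simp

theorem gegQuotient_pos (hlam : -(1 / 2 : ℝ) < lam) (hx : 1 ≤ x) : 0 < gegQuotient lam x := by
  have h₁ : 0 < 2 * lam + 1 := by linarith
  have h₅ : 0 < 2 * lam + 5 := by linarith
  exact lt_of_le_of_lt (by positivity) (sq_mul_sq_div_lt_gegQuotient hlam hx)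

/-- A majorant of the squared Frobenius norm of the Gram matrix on a parity block. -/
noncomputable def traceMajorant (lam x : ℝ) : ℝ :=
  (x + lam + 2) ^ 8 / (4 * (2 * lam + 1) ^ 2 * (2 * lam + 5))

theorem traceMajorant_pos (hlam : -(1 / 2 : ℝ) < lam) (hx : -1 ≤ x) : 0 < traceMajorant lam x := by
  have h₁ : 0 < 2 * lam + 1 := by linarith
  have h₂ : 0 < x + lam + 2 := by linarith
  have h₅ : 0 < 2 * lam + 5 := by linarith
  rw [traceMajorant]
  positivity

theorem traceMajorant_le (hlam : -(1 / 2 : ℝ) < lam) (hx : -1 ≤ x) {y : ℝ} (hxy : x ≤ y) :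
    traceMajorant lam x ≤ traceMajorant lam y := by
  have h₁ : 0 < 2 * lam + 1 := by linarith
  have h₂ : 0 ≤ x + lam + 2 := by linarith
  have h₅ : 0 < 2 * lam + 5 := by linarith
  rw [traceMajorant, traceMajorant]
  gcongr

theorem sqrt_traceMajorant (hlam : -(1 / 2 : ℝ) < lam) :
    √(traceMajorant lam x) = (x + lam + 2) ^ 4 / (2 * (2 * lam + 1) * √(2 * lam + 5)) := by
  have h₁ : 0 ≤ 2 * (2 * lam + 1) := by linarith
  rw [traceMajorant, show (x + lam + 2) ^ 8 = ((x + lam + 2) ^ 4) ^ 2 by ring,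
    show 4 * (2 * lam + 1) ^ 2 * (2 * lam + 5) = (2 * (2 * lam + 1)) ^ 2 * (2 * lam + 5) by ring,
    Real.sqrt_div (by positivity), Real.sqrt_mul (by positivity), Real.sqrt_sq (by positivity),
    Real.sqrt_sq h₁]

theorem sixteen_mul_pow_seven_add_le {m : ℝ} (hm : 0 ≤ m) :
    16 * (m ^ 7 + 21 * m ^ 5) ≤ (m + 2) ^ 8 - m ^ 8 := by
  have difference : (m + 2) ^ 8 - m ^ 8 - 16 * (m ^ 7 + 21 * m ^ 5) = 112 * m ^ 6 + 112 * m ^ 5 +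
      1120 * m ^ 4 + 1792 * m ^ 3 + 1792 * m ^ 2 + 1024 * m + 256 := by ring
  rw [← sub_nonneg, difference]
  positivity

/-- With `(21 + lam²) (2 lam + 3)` in place of the coefficient of `m²` and without the constant
term, the last factor and `m² - lam²` have product `(2 lam + 3) m² (m⁴ + 21 m² - 21 lam² - lam⁴)`.
-/
theorem traceMajorant_increment_numerator_le {m : ℝ} (hlam : -(1 / 2 : ℝ) < lam) (hm : 0 ≤ m)
    (hgap : 0 ≤ m ^ 2 - lam ^ 2) :
    16 * (m * (m ^ 2 - lam ^ 2) * gegQuartic lam (m - lam)) ≤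
      (2 * lam + 3) * ((m + 2) ^ 8 - m ^ 8) := by
  have h₁ : 0 < 2 * lam + 1 := by linarith
  have h₃ : 0 < 2 * lam + 3 := by linarith
  have quadratic_coeff_le :
      10 * lam ^ 2 + 31 * lam + 20 ≤ (2 * lam + 3) * (21 + lam ^ 2) := by
    nlinarith [mul_nonneg h₁.le (sq_nonneg (lam - 2))]
  have constant_term_nonneg :
      0 ≤ (lam + 1) * (lam + 2) * (2 * lam ^ 3 + 7 * lam ^ 2 + 6 * lam + 4) :=
    mul_nonneg (mul_nonneg (by linarith) (by linarith))
      (by nlinarith [mul_nonneg h₁.le (sq_nonneg lam)])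
  rw [gegQuartic, sub_add_cancel]
  calc
    _ ≤ 16 * (m * (m ^ 2 - lam ^ 2) *
        ((2 * lam + 3) * m ^ 4 + (2 * lam + 3) * (21 + lam ^ 2) * m ^ 2 - 0)) := by gcongr
    _ = (2 * lam + 3) * (16 * (m ^ 7 + 21 * m ^ 5)) -
        16 * (2 * lam + 3) * m ^ 3 * (lam ^ 2 * (21 + lam ^ 2)) := by ring
    _ ≤ (2 * lam + 3) * (16 * (m ^ 7 + 21 * m ^ 5)) := sub_le_self _ (by positivity)
    _ ≤ (2 * lam + 3) * ((m + 2) ^ 8 - m ^ 8) :=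
      mul_le_mul_of_nonneg_left (sixteen_mul_pow_seven_add_le hm) h₃.le

theorem traceMajorant_sub_two_add_le (hlam : -(1 / 2 : ℝ) < lam) (hx : 1 ≤ x) :
    traceMajorant lam (x - 2) + gegRatio lam x * (2 * gegQuotient lam x - gegRatio lam x) ≤
      traceMajorant lam x := by
  obtain ⟨m, rfl⟩ : ∃ m, x = m - lam := ⟨x + lam, by ring⟩
  have h₁ : 0 < 2 * lam + 1 := by linarith
  have h₃ : 0 < 2 * lam + 3 := by linarith
  have h₅ : 0 < 2 * lam + 5 := by linarith
  have numerator_le :=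
    traceMajorant_increment_numerator_le (m := m) hlam (by linarith) (by nlinarith)
  have quotient_le := div_le_div_of_nonneg_right numerator_le
    (by positivity : 0 ≤ 4 * (2 * lam + 1) ^ 2 * (2 * lam + 3) * (2 * lam + 5))
  rw [← le_sub_iff_add_le', traceMajorant, traceMajorant, gegQuotient, gegRatio]
  refine (Eq.trans_le ?_ quotient_le).trans_eq ?_ <;> field_simp <;> ring

end RationalFunctions

section NormRatios

variable {lam : ℝ} (hlam : -(1 / 2 : ℝ) < lam)

theorem two_mul_add_one_mul_gegDerivNormSq (k : ℕ) :
    (2 * lam + 1) * gegDerivNormSq hlam k =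
      2 * k * (k + lam) * (k + 2 * lam) * gegNormSq hlam k := by
  induction k using Nat.twoStepInduction with
  | zero => simp [gegDerivNormSq]
  | one =>
    have h := gegDerivNormSq_succ hlam 0
    have h₀ : gegDerivNormSq hlam 0 = 0 := by simp [gegDerivNormSq]
    push_cast at h ⊢
    linear_combination (2 * lam + 1) * (h + h₀)
  | more k _ ih =>
    have hsucc := gegDerivNormSq_succ hlam k
    have hsucc' := gegDerivNormSq_succ hlam (k + 1)
    have hadd := gegDerivNormSq_add_two hlam k
    push_cast at ih hsucc' ⊢
    linear_combination ((k : ℝ) + 2 + 2 * lam) * hsucc' - ((k : ℝ) + 1) * (hadd - hsucc) + ih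

theorem gegDerivNormSq_eq (k : ℕ) :
    gegDerivNormSq hlam k = gegRatio lam k * gegNormSq hlam k := by
  have h : 2 * lam + 1 ≠ 0 := by linarith
  rw [gegRatio, div_mul_eq_mul_div, eq_div_iff h, mul_comm, two_mul_add_one_mul_gegDerivNormSq]

theorem gegDerivNormSq_pos {k : ℕ} (hk : 1 ≤ k) : 0 < gegDerivNormSq hlam k := by
  rw [gegDerivNormSq_eq]
  exact mul_pos (gegRatio_pos hlam (by exact_mod_cast hk)) (gegNormSq_pos hlam k)

theorem mul_gegDerivNormSq_add_two (k : ℕ) :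
    (k : ℝ) * (k + 1) * gegDerivNormSq hlam (k + 2) =
      (k + 2 + 2 * lam) * (k + 1 + 2 * lam) * gegDerivNormSq hlam k := by
  have hratio := two_mul_add_one_mul_gegDerivNormSq hlam (k + 1)
  have hsucc := gegDerivNormSq_succ hlam k
  have hadd := gegDerivNormSq_add_two hlam k
  push_cast at hratio
  linear_combination (k : ℝ) * (k + 1) * hadd -
    2 * ((k : ℝ) + 1 + lam) * (hratio - (2 * lam + 1) * hsucc)

theorem gegQuotient_mul_gegDerivNormSq (k : ℕ) :
    gegQuotient lam k * gegDerivNormSq hlam k =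
      (gegQuotient lam (k + 2) - gegRatio lam (k + 2)) * gegDerivNormSq hlam (k + 2) := by
  have h : ((k : ℝ) + 2 + 2 * lam) * (k + 1 + 2 * lam) ≠ 0 := by
    have h₁ : 0 < (k : ℝ) + 1 + 2 * lam := by linarith [(k.cast_nonneg : (0 : ℝ) ≤ k)]
    exact mul_ne_zero (by linarith) h₁.ne'
  apply mul_left_cancel₀ h
  linear_combination -gegDerivNormSq hlam (k + 2) *
    mul_gegQuotient_add_two_sub_gegRatio (x := k) hlam -
      gegQuotient lam k * mul_gegDerivNormSq_add_two hlam k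

theorem sum_gegRatio_mul_gegDerivNormSq (n : ℕ) :
    ∑ k ∈ parityBlock n, gegRatio lam k * gegDerivNormSq hlam k =
      gegQuotient lam n * gegDerivNormSq hlam n := by
  induction n using Nat.twoStepInduction with
  | zero => simp [parityBlock_zero, gegDerivNormSq]
  | one => simp [parityBlock_one, gegQuotient_one hlam]
  | more n ih _ =>
    rw [sum_parityBlock_add_two, ih, gegQuotient_mul_gegDerivNormSq]
    push_cast
    ring

end NormRatios

section UpperBound

variable {lam : ℝ} (hlam : -(1 / 2 : ℝ) < lam)

/-- The squared Frobenius norm of the Gram matrix of the derivatives of the Gegenbauer polynomials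
with degrees in `parityBlock n`, in the normalised basis. -/
noncomputable def gegTrace (n : ℕ) : ℝ :=
  ∑ j ∈ parityBlock n, ∑ k ∈ parityBlock n,
    gegDerivNormSq hlam (min j k) ^ 2 / (gegNormSq hlam j * gegNormSq hlam k)

theorem sum_gegDerivNormSq_sq_div (n : ℕ) :
    ∑ k ∈ parityBlock n,
        gegDerivNormSq hlam k ^ 2 / (gegNormSq hlam k * gegNormSq hlam (n + 2)) =
      gegRatio lam (n + 2) * (gegQuotient lam (n + 2) - gegRatio lam (n + 2)) := by
  have summand (k : ℕ) : gegDerivNormSq hlam k ^ 2 / (gegNormSq hlam k * gegNormSq hlam (n + 2)) =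
      gegRatio lam k * gegDerivNormSq hlam k / gegNormSq hlam (n + 2) := by
    have hk := (gegNormSq_pos hlam k).ne'
    rw [gegDerivNormSq_eq]
    field_simp
  have hn := (gegNormSq_pos hlam (n + 2)).ne'
  simp only [summand]
  rw [← Finset.sum_div, sum_gegRatio_mul_gegDerivNormSq, gegQuotient_mul_gegDerivNormSq,
    gegDerivNormSq_eq]
  push_cast
  field_simp

theorem gegTrace_add_two (n : ℕ) :
    gegTrace hlam (n + 2) = gegTrace hlam n +
      gegRatio lam (n + 2) * (2 * gegQuotient lam (n + 2) - gegRatio lam (n + 2)) := by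
  have last_column : ∑ j ∈ parityBlock n, gegDerivNormSq hlam (min j (n + 2)) ^ 2 /
      (gegNormSq hlam j * gegNormSq hlam (n + 2)) =
        gegRatio lam (n + 2) * (gegQuotient lam (n + 2) - gegRatio lam (n + 2)) := by
    refine (Finset.sum_congr rfl fun j hj => ?_).trans (sum_gegDerivNormSq_sq_div hlam n)
    rw [min_eq_left ((mem_parityBlock.1 hj).1.trans (n.le_add_right 2))]
  have last_row := last_column
  simp only [min_comm _ (n + 2), mul_comm (gegNormSq hlam _) (gegNormSq hlam (n + 2))] at last_row
  have corner : gegDerivNormSq hlam (n + 2) ^ 2 /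
      (gegNormSq hlam (n + 2) * gegNormSq hlam (n + 2)) = gegRatio lam (n + 2) ^ 2 := by
    have hn := (gegNormSq_pos hlam (n + 2)).ne'
    rw [gegDerivNormSq_eq]
    push_cast
    field_simp
  rw [gegTrace, sum_parityBlock_add_two]
  simp only [sum_parityBlock_add_two (n := n), Finset.sum_add_distrib]
  rw [← gegTrace, last_column, last_row, min_self, corner]
  ring

theorem gegTrace_lt (n : ℕ) : gegTrace hlam n < traceMajorant lam n := by
  induction n using Nat.twoStepInduction with
  | zero =>
    have trace_zero : gegTrace hlam 0 = 0 := by simp [gegTrace, parityBlock_zero, gegDerivNormSq]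
    rw [trace_zero]
    exact traceMajorant_pos hlam (by norm_num)
  | one =>
    have trace_one : gegTrace hlam 1 = gegRatio lam 1 ^ 2 := by
      have h := (gegNormSq_pos hlam 1).ne'
      rw [gegTrace, parityBlock_one, Finset.sum_singleton, Finset.sum_singleton, min_self,
        gegDerivNormSq_eq]
      push_cast
      field_simp
    have hpos := traceMajorant_pos (x := 1 - 2) hlam (by norm_num)
    have hstep := traceMajorant_sub_two_add_le hlam le_rfl
    rw [gegQuotient_one hlam] at hstep
    rw [trace_one, Nat.cast_one]
    linarith
  | more n ih _ =>
    have hstep := traceMajorant_sub_two_add_le (x := n + 2) hlam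
      (by linarith [(n.cast_nonneg : (0 : ℝ) ≤ n)])
    rw [add_sub_cancel_right] at hstep
    rw [gegTrace_add_two]
    push_cast
    linarith

theorem gegIntegral_derivative_gegSum_sq_le (a : ℕ → ℝ) (n : ℕ) :
    gegIntegral hlam (derivative (gegSum lam a (parityBlock n)) ^ 2) ≤
      √(gegTrace hlam n) * gegIntegral hlam (gegSum lam a (parityBlock n) ^ 2) := by
  have frobenius := sum_sum_mul_sq_le_sum_sum_div_mul (parityBlock n)
    (fun j k => gegDerivNormSq hlam (min j k)) a fun k _ => gegNormSq_pos hlam k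
  rw [← gegIntegral_derivative_gegSum_parityBlock_sq, ← gegIntegral_gegSum_sq, ← gegTrace]
    at frobenius
  have hroot := (le_abs_self _).trans (Real.abs_le_sqrt frobenius)
  rwa [Real.sqrt_mul' _ (sq_nonneg _), Real.sqrt_sq (gegIntegral_sq_nonneg hlam _)] at hroot

theorem gegIntegral_derivative_sq_le {n : ℕ} {p : ℝ[X]} (hp : p.natDegree ≤ n + 1) :
    gegIntegral hlam (derivative p ^ 2) ≤
      √(max (gegTrace hlam (n + 1)) (gegTrace hlam n)) * gegIntegral hlam (p ^ 2) := by
  obtain ⟨a, rfl⟩ := exists_eq_gegSum hlam hp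
  set P := gegSum lam a (parityBlock (n + 1))
  set Q := gegSum lam a (parityBlock n)
  have split : gegSum lam a (Finset.Iic (n + 1)) = P + Q :=
    (sum_parityBlock_succ_add_sum_parityBlock _ n).symm
  have add_sq_of_orthogonal {f g : ℝ[X]} (h : gegIntegral hlam (f * g) = 0) :
      gegIntegral hlam ((f + g) ^ 2) = gegIntegral hlam (f ^ 2) + gegIntegral hlam (g ^ 2) := by
    rw [add_sq', mul_assoc, ← C_ofNat, map_add, map_add, gegIntegral_C_mul, h, mul_zero, add_zero]
  rw [split, derivative_add,
    add_sq_of_orthogonal (gegIntegral_derivative_gegSum_parityBlock_mul_derivative_gegSum ..),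
    add_sq_of_orthogonal (gegIntegral_gegSum_mul_gegSum _ _ _ (disjoint_parityBlock_succ n)),
    mul_add]
  refine add_le_add ((gegIntegral_derivative_gegSum_sq_le hlam a _).trans ?_)
    ((gegIntegral_derivative_gegSum_sq_le hlam a _).trans ?_)
  · exact mul_le_mul_of_nonneg_right (Real.sqrt_le_sqrt (le_max_left _ _))
      (gegIntegral_sq_nonneg hlam _)
  · exact mul_le_mul_of_nonneg_right (Real.sqrt_le_sqrt (le_max_right _ _))
      (gegIntegral_sq_nonneg hlam _)

end UpperBound

section LowerBound

variable {lam : ℝ} (hlam : -(1 / 2 : ℝ) < lam)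

/-- The test polynomial `∑ (‖G k'‖² / ‖G k‖²) G k` for the lower bound. -/
noncomputable def gegTestPoly (lam : ℝ) (n : ℕ) : ℝ[X] :=
  gegSum lam (fun k => gegRatio lam k) (parityBlock n)

theorem gegIntegral_gegTestPoly_sq (n : ℕ) :
    gegIntegral hlam (gegTestPoly lam n ^ 2) = gegQuotient lam n * gegDerivNormSq hlam n := by
  rw [gegTestPoly, gegIntegral_gegSum_sq, ← sum_gegRatio_mul_gegDerivNormSq]
  refine Finset.sum_congr rfl fun k _ => ?_
  rw [gegDerivNormSq_eq]
  ring

/-- By Cauchy-Schwarz against `G n'`, whose inner product with the derivative of the test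
polynomial is the squared norm of the test polynomial. -/
theorem gegQuotient_mul_gegIntegral_gegTestPoly_sq_le (n : ℕ) :
    gegQuotient lam n * gegIntegral hlam (gegTestPoly lam n ^ 2) ≤
      gegIntegral hlam (derivative (gegTestPoly lam n) ^ 2) := by
  have inner_eq : gegIntegral hlam (derivative (gegTestPoly lam n) * derivative (geg lam n)) =
      gegQuotient lam n * gegDerivNormSq hlam n := by
    rw [gegTestPoly, gegIntegral_derivative_gegSum_parityBlock_mul_derivative_geg,
      sum_gegRatio_mul_gegDerivNormSq]
  set p := gegTestPoly lam n with hp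
  have expand : (derivative p - C (gegQuotient lam n) * derivative (geg lam n)) ^ 2 =
      derivative p ^ 2 - C (2 * gegQuotient lam n) * (derivative p * derivative (geg lam n)) +
        C (gegQuotient lam n ^ 2) * derivative (geg lam n) ^ 2 := by
    simp only [C_mul, C_pow, map_ofNat]
    ring
  have residual_nonneg := gegIntegral_sq_nonneg hlam
    (derivative p - C (gegQuotient lam n) * derivative (geg lam n))
  rw [expand, map_add, map_sub, gegIntegral_C_mul, gegIntegral_C_mul, inner_eq,
    ← gegDerivNormSq] at residual_nonneg
  rw [hp, gegIntegral_gegTestPoly_sq]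
  linarith

include hlam in
theorem gegTestPoly_ne_zero {n : ℕ} (hn : 1 ≤ n) : gegTestPoly lam n ≠ 0 := by
  intro hzero
  have norm_sq := gegIntegral_gegTestPoly_sq hlam n
  rw [hzero, zero_pow two_ne_zero, map_zero] at norm_sq
  have quotient_pos : 0 < gegQuotient lam n := gegQuotient_pos hlam (by exact_mod_cast hn)
  exact (mul_pos quotient_pos (gegDerivNormSq_pos hlam hn)).ne norm_sq

end LowerBound

section MarkovConstant

variable {lam : ℝ} (hlam : -(1 / 2 : ℝ) < lam)

theorem markovConst_eq_sSup (n : ℕ) :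
    markovConst lam n =
      sSup ((fun p => √(gegIntegral hlam (derivative p ^ 2) / gegIntegral hlam (p ^ 2))) ''
        {p : ℝ[X] | p ≠ 0 ∧ p.natDegree ≤ n}) := by
  rw [markovConst]
  congr 1
  ext r
  simp only [gegNorm_eval hlam, Set.mem_ofPred_eq, Set.mem_image, and_assoc,
    Real.sqrt_div (gegIntegral_sq_nonneg hlam _), eq_comm]

theorem sqrt_gegIntegral_div_le {n : ℕ} {p : ℝ[X]} (hp : p ≠ 0) (hdeg : p.natDegree ≤ n + 1) :
    √(gegIntegral hlam (derivative p ^ 2) / gegIntegral hlam (p ^ 2)) ≤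
      √√(max (gegTrace hlam (n + 1)) (gegTrace hlam n)) :=
  Real.sqrt_le_sqrt <|
    (div_le_iff₀ (gegIntegral_sq_pos hlam hp)).2 (gegIntegral_derivative_sq_le hlam hdeg)

theorem markovConst_sq_le (n : ℕ) :
    markovConst lam (n + 1) ^ 2 ≤ √(max (gegTrace hlam (n + 1)) (gegTrace hlam n)) := by
  rw [markovConst_eq_sSup hlam, ← Real.le_sqrt (Real.sSup_nonneg ?_) (Real.sqrt_nonneg _)]
  · refine Real.sSup_le ?_ (Real.sqrt_nonneg _)
    rintro _ ⟨p, ⟨hp, hdeg⟩, rfl⟩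
    exact sqrt_gegIntegral_div_le hlam hp hdeg
  · rintro _ ⟨p, -, rfl⟩
    exact Real.sqrt_nonneg _

include hlam in
theorem gegQuotient_le_markovConst_sq {n : ℕ} (hn : 1 ≤ n) :
    gegQuotient lam n ≤ markovConst lam n ^ 2 := by
  obtain ⟨n, rfl⟩ := Nat.exists_eq_add_of_le' hn
  have ratios_bddAbove : BddAbove
      ((fun p => √(gegIntegral hlam (derivative p ^ 2) / gegIntegral hlam (p ^ 2))) ''
        {p : ℝ[X] | p ≠ 0 ∧ p.natDegree ≤ n + 1}) := by
    refine ⟨√√(max (gegTrace hlam (n + 1)) (gegTrace hlam n)), ?_⟩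
    rintro _ ⟨p, ⟨hp, hdeg⟩, rfl⟩
    exact sqrt_gegIntegral_div_le hlam hp hdeg
  have hp := gegTestPoly_ne_zero hlam hn
  have ratio_le := le_csSup ratios_bddAbove
    ⟨_, ⟨hp, natDegree_gegSum_parityBlock_le hlam _ (n + 1)⟩, rfl⟩
  rw [← markovConst_eq_sSup] at ratio_le
  have quotient_le := (le_div_iff₀ (gegIntegral_sq_pos hlam hp)).2
    (gegQuotient_mul_gegIntegral_gegTestPoly_sq_le hlam (n + 1))
  exact quotient_le.trans (Real.sqrt_le_iff.1 ratio_le).2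

end MarkovConstant

theorem markov_bounds_all_lambda_general (lam : ℝ) (hlam : -(1 / 2 : ℝ) < lam) (n : ℕ)
    (hn : 1 ≤ n) :
    (n + lam) ^ 2 * (n + 2 * min 0 lam) ^ 2 / ((2 * lam + 1) * (2 * lam + 5))
      < markovConst lam n ^ 2 ∧
    markovConst lam n ^ 2
      < (n + lam + 2) ^ 4 / (2 * (2 * lam + 1) * √(2 * lam + 5)) := by
  refine ⟨(sq_mul_sq_div_lt_gegQuotient hlam (by exact_mod_cast hn)).trans_le
    (gegQuotient_le_markovConst_sq hlam hn), ?_⟩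
  obtain ⟨n, rfl⟩ := Nat.exists_eq_add_of_le' hn
  have majorant_mono : traceMajorant lam n ≤ traceMajorant lam (n + 1 : ℕ) :=
    traceMajorant_le hlam (by linarith [(n.cast_nonneg : (0 : ℝ) ≤ n)]) (by simp)
  have trace_lt : max (gegTrace hlam (n + 1)) (gegTrace hlam n) < traceMajorant lam (n + 1 : ℕ) :=
    max_lt (gegTrace_lt hlam _) ((gegTrace_lt hlam n).trans_le majorant_mono)
  rw [← sqrt_traceMajorant hlam]
  exact (markovConst_sq_le hlam n).trans_lt <|
    (Real.sqrt_lt_sqrt_iff_of_pos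
      (traceMajorant_pos hlam (by linarith [(n + 1).cast_nonneg (α := ℝ)]))).2 trace_lt

theorem markov_bounds_all_lambda (lam : ℝ) (hlam : -(1/2 : ℝ) < lam) (n : ℕ) (hn : 3 ≤ n) :
    ((n : ℝ) + lam)^2 * ((n : ℝ) + 2 * min 0 lam)^2 / ((2*lam + 1) * (2*lam + 5))
      < (markovConst lam n)^2 ∧
    (markovConst lam n)^2
      < ((n : ℝ) + lam + max 0 lam + 2)^4 / (2 * (2*lam + 1) * Real.sqrt (2*lam + 5)) := by
  have h₁ : 0 ≤ 2 * lam + 1 := by linarith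
  have hn' : (3 : ℝ) ≤ n := by exact_mod_cast hn
  exact (markov_bounds_all_lambda_general lam hlam n (by omega)).imp_right fun h => h.trans_le <|
    div_le_div_of_nonneg_right
      (pow_le_pow_left₀ (by linarith) (by linarith [le_max_left 0 lam]) 4) (by positivity)
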